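/- arXiv:2011.10929 — 2 statements merged into one kernel-verified Lean document; each statement's English description precedes it below -/
import Mathlib

section
/- Let (E,ρ) and (E′,ρ′) be compact metric spaces that are Lipschitz equivalent, and suppose h_E(δ) → ∞ as δ → 0+. Then the gap sequences are comparable: there is a constant c > 1 such that c^{-1} ≤ g_i(E′)/g_i(E) ≤ c for all i ≥ 1. -/
/-!
A surjection `f : X → Y` with `dist (f x) (f y) ≤ c * dist x y` carries `δ`-chains to `cδ`-chains,
so it induces a surjection from the `δ`-components of `X` onto the `cδ`-components of `Y`. For
compact `X` these are finitely many, whence `h_Y(cδ) ≤ h_X(δ)` (`hNum_mul_le`). Consequently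
`δ / c` lies in the set defining `g_i(X)` whenever `δ` lies in the set defining `g_i(Y)`, which
gives `g_i(Y) ≤ c * g_i(X)` (`gapSeq_le_mul`). The theorem follows by applying this to a
bi-Lipschitz bijection and to its inverse; divergence of `h_E` enters only through `g_i(E) > 0`,
which makes the quotient meaningful.
-/

open Set Metric Relation Filter

noncomputable section

/-- The `δ`-connected components of a metric space `X`: equivalence classes of the
relation "joined by a finite chain with consecutive distances `≤ δ`". -/
def deltaComponents (X : Type*) [MetricSpace X] (δ : ℝ) : Set (Set X) :=
  {C | ∃ x : X, C = {y | Relation.ReflTransGen (fun a b => dist a b ≤ δ) x y}}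

/-- `h_X(δ)`: the number of `δ`-connected components of `X`. -/
def hNum (X : Type*) [MetricSpace X] (δ : ℝ) : ℕ :=
  Nat.card (deltaComponents X δ)

/-- The gap sequence `g_i(X) = sup {δ > 0 : h_X(δ) ≥ i + 1}`. -/
def gapSeq (X : Type*) [MetricSpace X] (i : ℕ) : ℝ :=
  sSup {δ : ℝ | 0 < δ ∧ i + 1 ≤ hNum X δ}

/-- Two metric spaces are Lipschitz equivalent if there is a bi-Lipschitz bijection
between them. -/
def LipschitzEquivalent (X Y : Type*) [MetricSpace X] [MetricSpace Y] : Prop :=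
  ∃ f : X → Y, Function.Bijective f ∧ ∃ c : ℝ, 1 ≤ c ∧
    ∀ x y : X, c⁻¹ * dist x y ≤ dist (f x) (f y) ∧ dist (f x) (f y) ≤ c * dist x y

/-- The `δ`-connected component of `x`. -/
def deltaComp {X : Type*} [MetricSpace X] (δ : ℝ) (x : X) : Set X :=
  {y | Relation.ReflTransGen (fun a b => dist a b ≤ δ) x y}

lemma deltaComp_eq {X : Type*} [MetricSpace X] {δ : ℝ} {x y : X}
    (h : Relation.ReflTransGen (fun a b => dist a b ≤ δ) x y) :
    deltaComp δ x = deltaComp δ y := by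
  have h' : Relation.ReflTransGen (fun a b : X => dist a b ≤ δ) y x := by
    have : Std.Symm (fun a b : X => dist a b ≤ δ) := ⟨fun a b hab => by rwa [dist_comm]⟩
    exact Relation.ReflTransGen.stdSymm.symm _ _ h
  ext z
  exact ⟨fun hz => h'.trans hz, fun hz => h.trans hz⟩

lemma reflTransGen_of_deltaComp_eq {X : Type*} [MetricSpace X] {δ : ℝ} {x y : X}
    (h : deltaComp δ x = deltaComp δ y) :
    Relation.ReflTransGen (fun a b => dist a b ≤ δ) x y := by
  have : y ∈ deltaComp δ y := Relation.ReflTransGen.refl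
  rw [← h] at this
  exact this

lemma deltaComponents_eq_range (X : Type*) [MetricSpace X] (δ : ℝ) :
    deltaComponents X δ = Set.range (deltaComp (X := X) δ) := by
  ext C
  exact ⟨fun ⟨x, hx⟩ => ⟨x, hx.symm⟩, fun ⟨x, hx⟩ => ⟨x, hx.symm⟩⟩

/-- The centres of a finite cover by `δ`-balls meet every `δ`-component. -/
lemma finite_deltaComponents (X : Type*) [MetricSpace X] [CompactSpace X] {δ : ℝ} (hδ : 0 < δ) :
    (deltaComponents X δ).Finite := by
  obtain ⟨t, -, ht, hcov⟩ := finite_cover_balls_of_compact (isCompact_univ (X := X)) hδ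
  refine (ht.image (deltaComp δ)).subset ?_
  rw [deltaComponents_eq_range]
  rintro _ ⟨x, rfl⟩
  obtain ⟨y, hy, hxy⟩ := Set.mem_iUnion₂.1 (hcov (Set.mem_univ x))
  refine ⟨y, hy, deltaComp_eq (Relation.ReflTransGen.single ?_)⟩
  rw [dist_comm]
  exact (Metric.mem_ball.1 hxy).le

lemma hNum_mul_le {X Y : Type*} [MetricSpace X] [CompactSpace X] [MetricSpace Y]
    {f : X → Y} (hf : Function.Surjective f) {c : ℝ} (hc : 0 < c)
    (hlip : ∀ x y, dist (f x) (f y) ≤ c * dist x y) {δ : ℝ} (hδ : 0 < δ) :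
    hNum Y (c * δ) ≤ hNum X δ := by
  have hfin := finite_deltaComponents X hδ
  unfold hNum
  rw [deltaComponents_eq_range] at hfin ⊢
  rw [deltaComponents_eq_range]
  have : Finite (Set.range (deltaComp (X := X) δ)) := hfin
  -- The induced map on components, defined through a choice of representatives.
  let F : Set.range (deltaComp (X := X) δ) → Set.range (deltaComp (X := Y) (c * δ)) :=
    fun C => ⟨deltaComp (c * δ) (f C.2.choose), Set.mem_range_self _⟩
  refine Nat.card_le_card_of_surjective F ?_
  rintro ⟨_, y, rfl⟩
  obtain ⟨x, rfl⟩ := hf y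
  have hx : ∃ x', deltaComp δ x' = deltaComp δ x := ⟨x, rfl⟩
  refine ⟨⟨deltaComp δ x, hx⟩, Subtype.ext (deltaComp_eq ?_)⟩
  refine Relation.ReflTransGen.lift f (fun a b hab => ?_) _ _
    (reflTransGen_of_deltaComp_eq hx.choose_spec)
  exact (hlip a b).trans (mul_le_mul_of_nonneg_left hab hc.le)

/-- For `i ≥ 1` the supremum defining `g_i(X)` is over a bounded set: at scales beyond the
diameter there is at most one component. -/
lemma bddAbove_gapSet (X : Type*) [MetricSpace X] [CompactSpace X] {i : ℕ} (hi : 1 ≤ i) :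
    BddAbove {δ : ℝ | 0 < δ ∧ i + 1 ≤ hNum X δ} := by
  refine ⟨Metric.diam (Set.univ : Set X), ?_⟩
  rintro δ ⟨-, hcard⟩
  by_contra! hlt
  have hsub : Subsingleton (deltaComponents X δ) := by
    rw [deltaComponents_eq_range]
    constructor
    rintro ⟨_, x, rfl⟩ ⟨_, y, rfl⟩
    refine Subtype.ext (deltaComp_eq (Relation.ReflTransGen.single ?_))
    exact (Metric.dist_le_diam_of_mem isCompact_univ.isBounded
      (Set.mem_univ x) (Set.mem_univ y)).trans hlt.le
  have h1 : hNum X δ ≤ 1 := Finite.card_le_one_iff_subsingleton.2 hsub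
  omega

lemma gapSeq_le_mul {X Y : Type*} [MetricSpace X] [CompactSpace X] [MetricSpace Y]
    {f : X → Y} (hf : Function.Surjective f) {c : ℝ} (hc : 0 < c)
    (hlip : ∀ x y, dist (f x) (f y) ≤ c * dist x y) {i : ℕ} (hi : 1 ≤ i) :
    gapSeq Y i ≤ c * gapSeq X i := by
  refine Real.sSup_le ?_ (mul_nonneg hc.le (Real.sSup_nonneg fun δ hδ => hδ.1.le))
  rintro δ ⟨hδ, hcard⟩
  have hpos : 0 < δ / c := div_pos hδ hc
  have hle := hNum_mul_le hf hc hlip hpos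
  rw [mul_div_cancel₀ _ hc.ne'] at hle
  have hmem : δ / c ≤ gapSeq X i := le_csSup (bddAbove_gapSet X hi) ⟨hpos, hcard.trans hle⟩
  rwa [div_le_iff₀' hc] at hmem

lemma gapSeq_pos (X : Type*) [MetricSpace X] [CompactSpace X]
    (htend : Tendsto (fun δ => hNum X δ) (nhdsWithin 0 (Set.Ioi 0)) atTop)
    {i : ℕ} (hi : 1 ≤ i) : 0 < gapSeq X i := by
  obtain ⟨δ, hcard, hδ⟩ :=
    ((htend.eventually_ge_atTop (i + 1)).and self_mem_nhdsWithin).exists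
  exact lt_of_lt_of_le hδ (le_csSup (bddAbove_gapSet X hi) ⟨hδ, hcard⟩)

theorem gap_sequences_comparable_of_lipschitz_equivalent
    (E E' : Type*) [MetricSpace E] [CompactSpace E] [MetricSpace E'] [CompactSpace E']
    (hLip : LipschitzEquivalent E E')
    (htend : Tendsto (fun δ => hNum E δ) (nhdsWithin 0 (Set.Ioi 0)) atTop) :
    ∃ c : ℝ, 1 < c ∧ ∀ i : ℕ, 1 ≤ i →
      c⁻¹ ≤ gapSeq E' i / gapSeq E i ∧ gapSeq E' i / gapSeq E i ≤ c := by
  obtain ⟨f, hbij, c, hc, hf⟩ := hLip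
  have hc0 : 0 < c := by linarith
  have hinv : ∀ a b : E', dist ((Equiv.ofBijective f hbij).symm a)
      ((Equiv.ofBijective f hbij).symm b) ≤ c * dist a b := by
    intro a b
    obtain ⟨x, rfl⟩ := hbij.2 a
    obtain ⟨y, rfl⟩ := hbij.2 b
    rw [Equiv.ofBijective_symm_apply_apply, Equiv.ofBijective_symm_apply_apply]
    exact (inv_mul_le_iff₀ hc0).1 (hf x y).1
  -- `c` itself may equal `1`, while the constant sought is strictly larger.
  refine ⟨c + 1, by linarith, fun i hi => ?_⟩
  have hpos := gapSeq_pos E htend hi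
  have h1 : gapSeq E' i ≤ c * gapSeq E i := gapSeq_le_mul hbij.2 hc0 (fun x y => (hf x y).2) hi
  have h2 : gapSeq E i ≤ c * gapSeq E' i :=
    gapSeq_le_mul (Equiv.ofBijective f hbij).symm.surjective hc0 hinv hi
  have hpos' : 0 < gapSeq E' i := pos_of_mul_pos_right (hpos.trans_le h2) hc0.le
  constructor
  · rw [le_div_iff₀ hpos, inv_mul_le_iff₀ (by linarith)]
    linarith
  · rw [div_le_iff₀ hpos]
    linarith
end
end

section
/- Let (E,ρ) and (E′,ρ′) be compact metric spaces that are Lipschitz equivalent. If E is perfectly disconnected, then E′ is perfectly disconnected; moreover, every perfectly disconnected compact metric space is totally disconnected. -/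
/-!
On a compact space the restriction `δ < diam X` in the definition is harmless: for larger `δ` every
distance is at most `δ`. Perfect disconnectedness therefore says that for some `M > 0`, any two
points joined by a `δ`-chain are at distance at most `M * δ`, for all `δ > 0`
(`perfectlyDisconnected_iff`).

A bi-Lipschitz bijection with constant `c` pulls `δ`-chains back to `(c * δ)`-chains, so the
condition passes to the image with constant `c * M * c`. For total disconnectedness, each
`δ`-component is clopen, so two points of a preconnected set are joined by `δ`-chains for every
`δ > 0`; their distance is at most `M * δ` for every `δ > 0`, hence zero.
-/

open Set Metric Relation Filter

noncomputable section

/-- A compact metric space is perfectly disconnected if there is `M > 0` such that every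
`δ`-connected component `U` with `0 < δ < diam X` satisfies `diam U ≤ M·δ`. -/
def PerfectlyDisconnected (X : Type*) [MetricSpace X] : Prop :=
  ∃ M : ℝ, 0 < M ∧ ∀ δ : ℝ, 0 < δ → δ < Metric.diam (Set.univ : Set X) →
    ∀ U ∈ deltaComponents X δ, Metric.diam U ≤ M * δ

/-- Pointwise form of perfect disconnectedness, with no upper bound on the scale `δ`. -/
theorem perfectlyDisconnected_iff {X : Type*} [MetricSpace X] [CompactSpace X] :
    PerfectlyDisconnected X ↔ ∃ M : ℝ, 0 < M ∧ ∀ δ : ℝ, 0 < δ → ∀ x y : X,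
      Relation.ReflTransGen (fun a b : X => dist a b ≤ δ) x y → dist x y ≤ M * δ := by
  have hb : ∀ s : Set X, Bornology.IsBounded s := fun s =>
    isCompact_univ.isBounded.subset (subset_univ s)
  constructor
  · rintro ⟨M, hM, h⟩
    refine ⟨max M 1, lt_max_of_lt_left hM, fun δ hδ x y hxy => ?_⟩
    rcases lt_or_ge δ (diam (univ : Set X)) with hlt | hge
    · calc dist x y ≤ diam {z | ReflTransGen (fun a b : X => dist a b ≤ δ) x z} :=
            dist_le_diam_of_mem (hb _) ReflTransGen.refl hxy
        _ ≤ M * δ := h δ hδ hlt _ ⟨x, rfl⟩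
        _ ≤ max M 1 * δ := by gcongr; exact le_max_left _ _
    · calc dist x y ≤ diam (univ : Set X) :=
            dist_le_diam_of_mem (hb _) (mem_univ _) (mem_univ _)
        _ ≤ 1 * δ := by linarith
        _ ≤ max M 1 * δ := by gcongr; exact le_max_right _ _
  · rintro ⟨M, hM, h⟩
    refine ⟨M, hM, fun δ hδ _ U hU => ?_⟩
    obtain ⟨x, rfl⟩ := hU
    refine diam_le_of_forall_dist_le (by positivity) fun y hy z hz => h δ hδ y z ?_
    have hsymm : Std.Symm (fun a b : X => dist a b ≤ δ) :=
      ⟨fun a b hab => by rwa [dist_comm]⟩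
    exact (symm hy).trans hz

/-- A `δ`-component contains the `δ`-ball around each of its points, and so does its complement. -/
theorem isClopen_deltaComponent {X : Type*} [MetricSpace X] {δ : ℝ} (hδ : 0 < δ) (x : X) :
    IsClopen {y | Relation.ReflTransGen (fun a b : X => dist a b ≤ δ) x y} := by
  constructor
  · rw [← isOpen_compl_iff, Metric.isOpen_iff]
    refine fun y hy => ⟨δ, hδ, fun z hz hxz => hy ?_⟩
    exact ReflTransGen.tail hxz (mem_ball.1 hz).le
  · rw [Metric.isOpen_iff]
    refine fun y hy => ⟨δ, hδ, fun z hz => ?_⟩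
    exact ReflTransGen.tail hy (mem_ball'.1 hz).le

theorem PerfectlyDisconnected.totallyDisconnectedSpace {X : Type*} [MetricSpace X]
    [CompactSpace X] (h : PerfectlyDisconnected X) : TotallyDisconnectedSpace X := by
  obtain ⟨M, hM, h⟩ := perfectlyDisconnected_iff.1 h
  refine ⟨fun S _ hS x hx y hy => dist_le_zero.1 (le_of_forall_pos_le_add fun ε hε => ?_)⟩
  have hδ : 0 < ε / M := by positivity
  have hchain := hS.subset_isClopen (isClopen_deltaComponent hδ x) ⟨x, hx, ReflTransGen.refl⟩ hy
  calc dist x y ≤ M * (ε / M) := h _ hδ x y hchain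
    _ = 0 + ε := by field_simp; simp

theorem PerfectlyDisconnected.of_lipschitzEquivalent {X Y : Type*} [MetricSpace X]
    [CompactSpace X] [MetricSpace Y] [CompactSpace Y] (hXY : LipschitzEquivalent X Y)
    (h : PerfectlyDisconnected X) : PerfectlyDisconnected Y := by
  obtain ⟨M, hM, h⟩ := perfectlyDisconnected_iff.1 h
  obtain ⟨f, hf, c, hc, hfc⟩ := hXY
  have hc0 : 0 < c := by linarith
  obtain ⟨g, -, hg⟩ := Function.bijective_iff_has_inverse.1 hf
  refine perfectlyDisconnected_iff.2 ⟨c * M * c, by positivity, fun δ hδ x y hxy => ?_⟩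
  have hchain : ReflTransGen (fun a b : X => dist a b ≤ c * δ) (g x) (g y) := by
    refine ReflTransGen.lift g (fun a b hab => ?_) _ _ hxy
    have h1 := (hfc (g a) (g b)).1
    rw [hg a, hg b, inv_mul_le_iff₀ hc0] at h1
    exact h1.trans (by gcongr)
  have h2 := (hfc (g x) (g y)).2
  rw [hg x, hg y] at h2
  calc dist x y ≤ c * dist (g x) (g y) := h2
    _ ≤ c * (M * (c * δ)) := by gcongr; exact h _ (by positivity) _ _ hchain
    _ = c * M * c * δ := by ring

theorem perfectly_disconnected_lipschitz_invariant_and_totally_disconnected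
    (E E' : Type*) [MetricSpace E] [CompactSpace E] [MetricSpace E'] [CompactSpace E']
    (hLip : LipschitzEquivalent E E') (hperf : PerfectlyDisconnected E) :
    PerfectlyDisconnected E' ∧
    ∀ (X : Type) [MetricSpace X] [CompactSpace X],
      PerfectlyDisconnected X → TotallyDisconnectedSpace X :=
  ⟨hperf.of_lipschitzEquivalent hLip, fun _ _ _ hX => hX.totallyDisconnectedSpace⟩
end
end
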